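/- arXiv:1806.11236 — 5 statements merged into one kernel-verified Lean document; each statement's English description precedes it below -/
import Mathlib

section
/- Suppose M = (1/n)·1·1ᵀ and let Z^k = ((I − Φ)M)^k Φ for integers k ≥ 1. Then every entry of Z^k is at least (1/n)·φ_min·(1 − φ_max)^k, and consequently every entry of H = Σ_{k=1}^∞ Z^k is at least φ_min(1 − φ_max)/(n·φ_max), where φ_max = max_i φ_i and φ_min = min_i φ_i. -/
/-! The matrix `A = (I − Φ)M` has rank one: its entries are `(1 − φ_i)/n`, independent of the column.
Hence `A^(k+1) = c^k • A` with `c` the average of the `1 − φ_i` (the trace of `A`), so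
`Z^(k+1)` has entries `c^k (1 − φ_i) φ_j / n`. The entrywise bound follows from
`1 − φ_max ≤ c`, `1 − φ_max ≤ 1 − φ_i` and `φ_min ≤ φ_j`. The series is geometric of ratio
`c ∈ [0, 1)`, and `1 − c`, the average of the `φ_i`, is at most `φ_max`. -/

open Matrix BigOperators

/-- The global-average matrix `M = (1/n)·1·1ᵀ`. -/
noncomputable def Mavg (n : ℕ) : Matrix (Fin n) (Fin n) ℝ :=
  Matrix.of fun _ _ => (1 : ℝ) / n

/-- Closed form of the entries of `Z^(k+1)`. -/
lemma Z_apply {n : ℕ} (phi : Fin n → ℝ) (k : ℕ) (i j : Fin n) :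
    (((1 - Matrix.diagonal phi) * Mavg n) ^ (k + 1) * Matrix.diagonal phi) i j =
      (∑ l, (1 - phi l) / n) ^ k * ((1 - phi i) * phi j / n) := by
  have hA : ∀ a b, ((1 - Matrix.diagonal phi) * Mavg n) a b = (1 - phi a) / n := by
    intro a b
    rw [← Matrix.diagonal_one, Matrix.diagonal_sub, Matrix.diagonal_mul]
    simp [Mavg, div_eq_mul_inv]
  have hpow : ∀ b, (((1 - Matrix.diagonal phi) * Mavg n) ^ (k + 1)) i b =
      (∑ l, (1 - phi l) / n) ^ k * ((1 - phi i) / n) := by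
    induction k with
    | zero => intro b; simp [hA]
    | succ k ih =>
      intro b
      rw [pow_succ, Matrix.mul_apply]
      simp only [ih, hA]
      rw [← Finset.mul_sum]
      ring
  rw [Matrix.mul_diagonal, hpow]
  ring

/-- With `M = (1/n)·1·1ᵀ` and `Z^k = ((I − Φ)M)^k Φ` for
`k ≥ 1`, every entry of `Z^k` is at least `(1/n)·φ_min·(1 − φ_max)^k`, and
consequently every entry of `H = ∑_{k=1}^∞ Z^k` is at least
`φ_min(1 − φ_max)/(n·φ_max)`, where `φ_max = max_i φ_i`, `φ_min = min_i φ_i`. -/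
theorem stmt_13 {n : ℕ} (hn : 2 ≤ n) (phi : Fin n → ℝ)
    (hphi : ∀ i, phi i ∈ Set.Ioo (0 : ℝ) 1) :
    (∀ k : ℕ, 1 ≤ k → ∀ i j,
      (1 / n) * (⨅ i, phi i) * (1 - ⨆ i, phi i) ^ k ≤
        (((1 - Matrix.diagonal phi) * Mavg n) ^ k * Matrix.diagonal phi) i j) ∧
    (∀ i j,
      (⨅ i, phi i) * (1 - ⨆ i, phi i) / (n * ⨆ i, phi i) ≤
        (∑' k : ℕ,
          ((1 - Matrix.diagonal phi) * Mavg n) ^ (k + 1) * Matrix.diagonal phi) i j) := by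
  have hn0 : (0 : ℝ) < n := by exact_mod_cast (by omega : 0 < n)
  have : Nonempty (Fin n) := ⟨⟨0, by omega⟩⟩
  have hmin : ∀ i, (⨅ i, phi i) ≤ phi i := fun i => ciInf_le (Set.finite_range phi).bddBelow i
  have hmax : ∀ i, phi i ≤ ⨆ i, phi i := fun i => le_ciSup (Set.finite_range phi).bddAbove i
  obtain ⟨p, hp⟩ := exists_eq_ciInf_of_finite (f := phi)
  obtain ⟨q, hq⟩ := exists_eq_ciSup_of_finite (f := phi)
  have hmin0 : 0 < ⨅ i, phi i := hp ▸ (hphi p).1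
  have hmax0 : 0 < ⨆ i, phi i := hq ▸ (hphi q).1
  have hmax1 : (⨆ i, phi i) < 1 := hq ▸ (hphi q).2
  have hsum : ∀ t : ℝ, ∑ _l : Fin n, t / n = t := by
    intro t
    rw [Finset.sum_const, Finset.card_univ, Fintype.card_fin, nsmul_eq_mul]
    field_simp
  have hcl : 1 - (⨆ i, phi i) ≤ ∑ l, (1 - phi l) / n := by
    rw [← hsum (1 - ⨆ i, phi i)]
    refine Finset.sum_le_sum fun l _ => ?_
    have := hmax l
    gcongr
  have hcu : ∑ l, (1 - phi l) / n ≤ 1 - ⨅ i, phi i := by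
    rw [← hsum (1 - ⨅ i, phi i)]
    refine Finset.sum_le_sum fun l _ => ?_
    have := hmin l
    gcongr
  have hZ := Z_apply phi
  generalize (∑ l, (1 - phi l) / n) = c at hZ hcl hcu
  generalize (⨅ i, phi i) = m at *
  generalize (⨆ i, phi i) = S at *
  have hent : ∀ i j, m * (1 - S) / n ≤ (1 - phi i) * phi j / n := by
    intro i j
    have h1 := hmax i
    have h2 := hmin j
    rw [mul_comm m]
    gcongr
    linarith
  constructor
  · intro k hk i j
    obtain ⟨k, rfl⟩ : ∃ r, k = r + 1 := ⟨k - 1, by omega⟩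
    rw [hZ]
    calc 1 / n * m * (1 - S) ^ (k + 1) = (1 - S) ^ k * (m * (1 - S) / n) := by ring
      _ ≤ c ^ k * ((1 - phi i) * phi j / n) := by
        have h3 : 0 ≤ 1 - S := by linarith
        have h4 : 0 ≤ c := by linarith
        have h5 := hent i j
        gcongr
  · intro i j
    have hS : HasSum (fun k : ℕ =>
        ((1 - Matrix.diagonal phi) * Mavg n) ^ (k + 1) * Matrix.diagonal phi)
        (Matrix.of fun i j => (1 - c)⁻¹ * ((1 - phi i) * phi j / n)) := by
      refine Pi.hasSum.2 fun a => Pi.hasSum.2 fun b => ?_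
      simp only [hZ]
      exact (hasSum_geometric_of_lt_one (by linarith) (by linarith)).mul_right _
    rw [hS.tsum_eq, Matrix.of_apply]
    calc m * (1 - S) / (n * S) = S⁻¹ * (m * (1 - S) / n) := by field_simp
      _ ≤ (1 - c)⁻¹ * ((1 - phi i) * phi j / n) := by
        have h3 : 0 ≤ 1 - S := by linarith
        have h4 : 0 < 1 - c := by linarith
        have h5 := hent i j
        have h6 : 1 - c ≤ S := by linarith
        gcongr
end

section
/- Regard S = S(φ) = (I − (I − Φ)M)^{-1}Φ as a function of φ = (φ_1,…,φ_n) ∈ (0,1)^n. Then S is differentiable in each φ_i, and for every i the partial derivative ∂S/∂φ_i has strictly positive entries in its i-th column and strictly negative entries in every other position. -/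
/-!
Write `A(φ) = I − (I − Φ)M`. Everything rests on a discrete minimum principle: if `A(φ) x ≥ 0`,
then evaluating at an index where `x` is minimal, and using that `M` is row-stochastic, gives
`x ≥ 0` (`nonneg_of_mulVec_nonneg`). Hence `A(φ)` is invertible, its inverse `N` is nonnegative,
and irreducibility propagates the positive entry `N b b` along directed paths, so `N` has strictly
positive entries (`inv_pos_entry`).

Moving only the `i`-th coordinate from `s = φ i` to `t` changes `A` by `(t − s) E M` and `Φ` by
`(t − s) E`, with `E` the `(i, i)` matrix unit, so exactly
`S(t) − S(s) = (t − s) N(t) E (I − M S(s))`. Continuity of matrix inversion then gives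
`∂S/∂φ_i = N E (I − M S)`, whose `(a, b)` entry is `N a i * (δ_{ib} − (M S) i b)`. Finally `M S` is
row-stochastic with strictly positive entries, so for `n ≥ 2` all its entries lie strictly between
`0` and `1`, which fixes the signs.
-/

open Matrix BigOperators

/-- The matrix `S(φ) = (I − (I − Φ)M)⁻¹ Φ`, with `Φ = diag(φ)`. -/
noncomputable def Sfun {n : ℕ} (M : Matrix (Fin n) (Fin n) ℝ)
    (phi : Fin n → ℝ) : Matrix (Fin n) (Fin n) ℝ :=
  (1 - (1 - Matrix.diagonal phi) * M)⁻¹ * Matrix.diagonal phi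

/-- The matrix `A(φ) = I − (I − Φ)M`, whose inverse appears in `Sfun`. -/
noncomputable def Afun {n : ℕ} (M : Matrix (Fin n) (Fin n) ℝ)
    (phi : Fin n → ℝ) : Matrix (Fin n) (Fin n) ℝ :=
  1 - (1 - Matrix.diagonal phi) * M

lemma Afun_mulVec {n : ℕ} (M : Matrix (Fin n) (Fin n) ℝ) (phi x : Fin n → ℝ) (a : Fin n) :
    (Afun M phi *ᵥ x) a = x a - (1 - phi a) * ∑ c, M a c * x c := by
  have h : (1 : Matrix (Fin n) (Fin n) ℝ) - diagonal phi = diagonal (fun k => 1 - phi k) := by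
    rw [← diagonal_one, diagonal_sub]
  rw [Afun, h, sub_mulVec, one_mulVec, ← mulVec_mulVec, Pi.sub_apply, mulVec_diagonal]
  rfl

/-- Minimum principle for `A(φ)`. -/
lemma nonneg_of_mulVec_nonneg {n : ℕ} {M : Matrix (Fin n) (Fin n) ℝ}
    (hMnn : ∀ i j, 0 ≤ M i j) (hMrow : ∀ i, ∑ j, M i j = 1) {phi : Fin n → ℝ}
    (hphi : ∀ i, phi i ∈ Set.Ioo (0 : ℝ) 1) {x : Fin n → ℝ}
    (hx : ∀ a, 0 ≤ (Afun M phi *ᵥ x) a) (a : Fin n) : 0 ≤ x a := by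
  obtain ⟨m, -, hm⟩ := Finset.exists_min_image Finset.univ x ⟨a, Finset.mem_univ a⟩
  refine le_trans ?_ (hm a (Finset.mem_univ a))
  have h1 := hx m
  rw [Afun_mulVec] at h1
  have h2 : x m ≤ ∑ c, M m c * x c := by
    calc x m = ∑ c, M m c * x m := by rw [← Finset.sum_mul, hMrow, one_mul]
      _ ≤ _ := Finset.sum_le_sum fun c _ =>
          mul_le_mul_of_nonneg_left (hm c (Finset.mem_univ c)) (hMnn m c)
  have h3 := mul_le_mul_of_nonneg_left h2 (sub_nonneg.2 (hphi m).2.le)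
  have h4 : 0 ≤ phi m * x m := by linarith
  exact nonneg_of_mul_nonneg_right h4 (hphi m).1

lemma Afun_det_ne_zero {n : ℕ} {M : Matrix (Fin n) (Fin n) ℝ}
    (hMnn : ∀ i j, 0 ≤ M i j) (hMrow : ∀ i, ∑ j, M i j = 1) {phi : Fin n → ℝ}
    (hphi : ∀ i, phi i ∈ Set.Ioo (0 : ℝ) 1) : (Afun M phi).det ≠ 0 := by
  intro h
  obtain ⟨v, hv, hv0⟩ := exists_mulVec_eq_zero_iff.2 h
  apply hv
  funext a
  have h1 := nonneg_of_mulVec_nonneg hMnn hMrow hphi (x := v) (by simp [hv0]) a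
  have h2 := nonneg_of_mulVec_nonneg hMnn hMrow hphi (x := -v) (by simp [mulVec_neg, hv0]) a
  simp only [Pi.neg_apply, Pi.zero_apply] at h2 ⊢
  linarith

/-- The columns of `A(φ)⁻¹` are nonnegative by the minimum principle; strict positivity starts on
the diagonal and spreads along the paths supplied by irreducibility. -/
lemma inv_pos_entry {n : ℕ} {M : Matrix (Fin n) (Fin n) ℝ}
    (hMnn : ∀ i j, 0 ≤ M i j) (hMrow : ∀ i, ∑ j, M i j = 1)
    (hMirr : ∀ i j, i ≠ j → Relation.TransGen (fun a b => 0 < M b a) i j) {phi : Fin n → ℝ}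
    (hphi : ∀ i, phi i ∈ Set.Ioo (0 : ℝ) 1) (a b : Fin n) : 0 < (Afun M phi)⁻¹ a b := by
  have hdet : IsUnit (Afun M phi).det := (Afun_det_ne_zero hMnn hMrow hphi).isUnit
  set x : Fin n → ℝ := fun c => (Afun M phi)⁻¹ c b with hxdef
  have hAx : ∀ c, (Afun M phi *ᵥ x) c = (1 : Matrix (Fin n) (Fin n) ℝ) c b := fun c => by
    rw [← mul_nonsing_inv _ hdet]; rfl
  have hone : ∀ c, 0 ≤ (1 : Matrix (Fin n) (Fin n) ℝ) c b := fun c => by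
    rw [one_apply]; split_ifs <;> norm_num
  have hx0 : ∀ c, 0 ≤ x c :=
    nonneg_of_mulVec_nonneg hMnn hMrow hphi fun c => by rw [hAx]; exact hone c
  have hrec : ∀ c, x c = (1 - phi c) * (∑ d, M c d * x d) + (1 : Matrix _ _ ℝ) c b := fun c => by
    have := hAx c
    rw [Afun_mulVec] at this
    linarith
  have hsum : ∀ c, 0 ≤ ∑ d, M c d * x d := fun c =>
    Finset.sum_nonneg fun d _ => mul_nonneg (hMnn c d) (hx0 d)
  have hb : 0 < x b := by
    rw [hrec b, one_apply_eq]
    have := mul_nonneg (sub_nonneg.2 (hphi b).2.le) (hsum b)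
    linarith
  have hstep : ∀ c d, 0 < x c → 0 < M d c → 0 < x d := fun c d hc hM => by
    rw [hrec d]
    have h1 : 0 < ∑ e, M d e * x e :=
      (mul_pos hM hc).trans_le (Finset.single_le_sum (f := fun e => M d e * x e)
        (fun e _ => mul_nonneg (hMnn d e) (hx0 e)) (Finset.mem_univ c))
    have := mul_pos (sub_pos.2 (hphi d).2) h1
    linarith [hone d]
  change 0 < x a
  by_cases hab : b = a
  · exact hab ▸ hb
  · have hpath := hMirr b a hab
    induction hpath with
    | single h => exact hstep _ _ hb h
    | @tail c d _ h ih =>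
      by_cases hbc : b = c
      · exact hstep _ _ (hbc ▸ hb) h
      · exact hstep _ _ (ih hbc) h

lemma diagonal_update {n : ℕ} (phi : Fin n → ℝ) (i : Fin n) (t : ℝ) :
    diagonal (Function.update phi i t)
      = diagonal phi + (t - phi i) • diagonal (Pi.single i (1 : ℝ)) := by
  rw [← diagonal_smul, diagonal_add]
  congr 1
  funext k
  by_cases hk : k = i
  · subst hk; simp
  · simp [hk]

lemma Afun_update {n : ℕ} (M : Matrix (Fin n) (Fin n) ℝ) (phi : Fin n → ℝ) (i : Fin n) (t : ℝ) :
    Afun M (Function.update phi i t)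
      = Afun M phi + (t - phi i) • (diagonal (Pi.single i 1) * M) := by
  rw [Afun, Afun, diagonal_update]
  simp only [sub_mul, add_mul, smul_mul_assoc]
  abel

/-- Exact increment of `S` along the `i`-th coordinate; no limit is involved. -/
lemma Sfun_update_sub {n : ℕ} {M : Matrix (Fin n) (Fin n) ℝ} {phi : Fin n → ℝ} {i : Fin n} {t : ℝ}
    (h0 : IsUnit (Afun M phi).det) (ht : IsUnit (Afun M (Function.update phi i t)).det) :
    Sfun M (Function.update phi i t) - Sfun M phi
      = (t - phi i) • ((Afun M (Function.update phi i t))⁻¹ *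
          (diagonal (Pi.single i 1) * (1 - M * Sfun M phi))) := by
  have hS0 : Afun M phi * Sfun M phi = diagonal phi := mul_nonsing_inv_cancel_left _ _ h0
  have hSt : Afun M (Function.update phi i t) * Sfun M (Function.update phi i t)
      = diagonal (Function.update phi i t) := mul_nonsing_inv_cancel_left _ _ ht
  have key : Afun M (Function.update phi i t) * (Sfun M (Function.update phi i t) - Sfun M phi)
      = (t - phi i) • (diagonal (Pi.single i 1) * (1 - M * Sfun M phi)) := by
    rw [mul_sub, hSt, diagonal_update, Afun_update, add_mul, hS0, smul_mul_assoc, mul_sub, mul_one, smul_sub,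
      mul_assoc]
    abel
  rw [← mul_smul_comm, ← key, nonsing_inv_mul_cancel_left _ _ ht]

/-- Regarding `S = S(φ)` as a function of
`φ ∈ (0,1)^n`, `S` is differentiable in each `φ_i`, and for every `i` the
partial derivative `∂S/∂φ_i` has strictly positive entries in its `i`-th
column and strictly negative entries everywhere else. -/
theorem stmt_14 {n : ℕ} (hn : 2 ≤ n) (W M : Matrix (Fin n) (Fin n) ℝ)
    (hWnn : ∀ i j, 0 ≤ W i j) (hWrow : ∀ i, ∑ j, W i j = 1)
    (hWirr : ∀ i j, i ≠ j → Relation.TransGen (fun a b => 0 < W b a) i j)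
    (hWprim : ∃ k : ℕ, 0 < k ∧ ∀ i j, 0 < (W ^ k) i j)
    (hMnn : ∀ i j, 0 ≤ M i j) (hMrow : ∀ i, ∑ j, M i j = 1)
    (hMW : ∀ i j, 0 < M i j ↔ 0 < W i j)
    (phi : Fin n → ℝ)
    (hphi : ∀ i, phi i ∈ Set.Ioo (0 : ℝ) 1) :
    ∀ i : Fin n, ∃ D : Matrix (Fin n) (Fin n) ℝ,
      (∀ a b, HasDerivAt (fun t => Sfun M (Function.update phi i t) a b)
        (D a b) (phi i)) ∧
      (∀ a, 0 < D a i) ∧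
      (∀ a b, b ≠ i → D a b < 0) := by
  intro i
  have hMirr : ∀ i j, i ≠ j → Relation.TransGen (fun a b => 0 < M b a) i j := by
    simpa only [hMW] using hWirr
  have hN := inv_pos_entry hMnn hMrow hMirr hphi
  have hdet : ∀ psi : Fin n → ℝ, (∀ j, psi j ∈ Set.Ioo (0 : ℝ) 1) → IsUnit (Afun M psi).det :=
    fun psi h => (Afun_det_ne_zero hMnn hMrow h).isUnit
  have hSpos : ∀ a b, 0 < Sfun M phi a b := fun a b => by
    change 0 < ((Afun M phi)⁻¹ * diagonal phi) a b
    rw [mul_diagonal]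
    exact mul_pos (hN a b) (hphi b).1
  -- `A(φ) 1 = φ` because `M` is row-stochastic, hence `S 1 = 1`.
  have hSone : Sfun M phi *ᵥ (fun _ => 1) = fun _ => 1 := by
    have h1 : Afun M phi *ᵥ (fun _ => 1) = diagonal phi *ᵥ (fun _ => 1) := by
      funext a
      rw [Afun_mulVec, mulVec_diagonal]
      simp [hMrow]
    change ((Afun M phi)⁻¹ * diagonal phi) *ᵥ (fun _ => 1) = _
    rw [← mulVec_mulVec, ← h1, mulVec_mulVec, nonsing_inv_mul _ (hdet phi hphi), one_mulVec]
  have hMSpos : ∀ b, 0 < (M * Sfun M phi) i b := fun b => by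
    obtain ⟨c, -, hc⟩ : ∃ c ∈ Finset.univ, 0 < M i c := by
      by_contra! h
      have := Finset.sum_nonpos h
      rw [hMrow] at this
      linarith
    rw [mul_apply]
    exact (mul_pos hc (hSpos c b)).trans_le (Finset.single_le_sum
      (f := fun e => M i e * Sfun M phi e b)
      (fun e _ => mul_nonneg (hMnn i e) (hSpos e b).le) (Finset.mem_univ c))
  have hMSrow : ∑ b, (M * Sfun M phi) i b = 1 := by
    have h : ((M * Sfun M phi) *ᵥ (fun _ => 1)) i = 1 := by
      rw [← mulVec_mulVec, hSone]
      simp [mulVec, dotProduct, hMrow]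
    simpa [mulVec, dotProduct] using h
  have hMSlt : (M * Sfun M phi) i i < 1 := by
    have : Nontrivial (Fin n) := Fin.nontrivial_iff_two_le.2 hn
    obtain ⟨b, hb⟩ := exists_ne i
    rw [← hMSrow]
    exact Finset.single_lt_sum hb (Finset.mem_univ i) (Finset.mem_univ b) (hMSpos b)
      fun k _ _ => (hMSpos k).le
  have hentry : ∀ (N : Matrix (Fin n) (Fin n) ℝ) (a b : Fin n),
      (N * (diagonal (Pi.single i (1 : ℝ)) * (1 - M * Sfun M phi)) : Matrix (Fin n) (Fin n) ℝ) a b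
        = N a i * (1 - M * Sfun M phi) i b := fun N a b => by
    rw [mul_apply, Finset.sum_eq_single i]
    · simp [diagonal_mul]
    · intro k _ hk
      simp [diagonal_mul, hk]
    · simp
  refine ⟨fun a b => (Afun M phi)⁻¹ a i * (1 - M * Sfun M phi) i b, fun a b => ?_, fun a => ?_,
    fun a b hb => ?_⟩
  · have hcont : ContinuousAt (fun t => (Afun M (Function.update phi i t))⁻¹ a i) (phi i) := by
      have hA : Continuous fun t => Afun M (Function.update phi i t) := by
        simp only [Afun_update]
        fun_prop
      have hinv : ContinuousAt Inv.inv (Afun M (Function.update phi i (phi i))) := by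
        apply continuousAt_matrix_inv
        have h := Afun_det_ne_zero hMnn hMrow hphi
        rw [Function.update_eq_self]
        simpa only [Ring.inverse_eq_inv'] using continuousAt_inv₀ h
      have h := ContinuousAt.comp (f := fun t => Afun M (Function.update phi i t)) hinv
        hA.continuousAt
      exact (continuous_apply_apply a i).continuousAt.comp h
    rw [hasDerivAt_iff_tendsto_slope]
    have hlim := (hcont.mul_const ((1 - M * Sfun M phi) i b)).tendsto
    rw [Function.update_eq_self] at hlim
    refine (hlim.mono_left nhdsWithin_le_nhds).congr' ?_
    have hev : ∀ᶠ t in nhdsWithin (phi i) {phi i}ᶜ, t ∈ Set.Ioo (0 : ℝ) 1 :=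
      nhdsWithin_le_nhds (isOpen_Ioo.mem_nhds (hphi i))
    filter_upwards [hev, self_mem_nhdsWithin] with t ht hne
    have hne' : t - phi i ≠ 0 := sub_ne_zero.2 hne
    have hupd : ∀ j, Function.update phi i t j ∈ Set.Ioo (0 : ℝ) 1 := fun j => by
      by_cases hj : j = i
      · subst hj; simpa using ht
      · simpa [hj] using hphi j
    have h := congrFun (congrFun (Sfun_update_sub (hdet phi hphi) (hdet _ hupd)) a) b
    rw [Matrix.smul_apply, hentry, Matrix.sub_apply, smul_eq_mul] at h
    rw [slope_def_field, Function.update_eq_self, h, mul_div_cancel_left₀ _ hne']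
  · refine mul_pos (hN a i) ?_
    rw [Matrix.sub_apply, one_apply_eq]
    linarith
  · refine mul_neg_of_pos_of_neg (hN a i) ?_
    rw [Matrix.sub_apply, one_apply_ne hb.symm]
    linarith [hMSpos b]
end

section
/- For every i and every φ ∈ (0,1)^n, the row vector (e_iᵀ − m_iᵀ)S satisfies: its i-th entry equals (φ_i/(1 − φ_i))·(1 − S_ii) and is strictly positive, and for every j ≠ i its j-th entry equals −φ_i·(m_iᵀ S e_j) and is strictly negative; here e_i is the i-th standard basis vector, m_iᵀ is the i-th row of M, and S_ii = e_iᵀ S e_i. -/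
/-!
Write `A = 1 - (1 - Φ)M`. A minimum principle holds for `A`: if `A v ≥ 0` entrywise then `v ≥ 0`,
as one sees at an index where `v` is minimal (`nonneg_of_damped_le`). Applied to `±v` it shows that
`A` is invertible, so `S = A⁻¹Φ` satisfies `S = Φ + (1 - Φ) M S`, from which both entry formulas
follow by algebra.

For the signs, the minimum principle applied to the columns of `S` gives `S ≥ 0`. The recursion gives
`S j j ≥ φ j > 0` and carries positivity of the `j`-th column along the edges of the strongly
connected graph, so `S > 0` entrywise. For `i ≠ j` the recursion reads `S i j = (1 - φ i) (M S) i j`,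
hence `(M S) i j > 0`. Since `A 1 = φ`, the rows of `S` sum to one, and `n ≥ 2` yields `S i i < 1`.
-/

open Matrix BigOperators

/-- Minimum principle for `1 - (1 - Φ)M`. -/
lemma nonneg_of_damped_le {n : ℕ} (M : Matrix (Fin n) (Fin n) ℝ)
    (hMnn : ∀ i j, 0 ≤ M i j) (hMrow : ∀ i, ∑ j, M i j = 1)
    (phi : Fin n → ℝ) (hphi : ∀ i, phi i ∈ Set.Ioo (0 : ℝ) 1) (v : Fin n → ℝ)
    (hv : ∀ i, (1 - phi i) * ∑ k, M i k * v k ≤ v i) (i : Fin n) : 0 ≤ v i := by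
  obtain ⟨a, -, ha⟩ := Finset.exists_min_image Finset.univ v ⟨i, Finset.mem_univ i⟩
  refine le_trans ?_ (ha i (Finset.mem_univ i))
  have h1 : v a ≤ ∑ k, M a k * v k := by
    calc v a = ∑ k, M a k * v a := by rw [← Finset.sum_mul, hMrow, one_mul]
      _ ≤ _ := Finset.sum_le_sum fun k hk => mul_le_mul_of_nonneg_left (ha k hk) (hMnn a k)
  have h2 := hv a
  obtain ⟨h3, h4⟩ := hphi a
  have h5 := mul_le_mul_of_nonneg_left h1 (sub_nonneg.2 h4.le)
  by_contra! h
  nlinarith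

lemma damped_mulVec_apply {n : ℕ} (M : Matrix (Fin n) (Fin n) ℝ) (phi v : Fin n → ℝ) (i : Fin n) :
    ((1 - (1 - Matrix.diagonal phi) * M) *ᵥ v) i = v i - (1 - phi i) * ∑ k, M i k * v k := by
  rw [Matrix.sub_mulVec, Matrix.one_mulVec, ← Matrix.mulVec_mulVec, Matrix.sub_mulVec,
    Matrix.one_mulVec]
  simp only [Pi.sub_apply, Matrix.mulVec_diagonal]
  simp only [Matrix.mulVec, dotProduct]
  ring

lemma isUnit_det_damped {n : ℕ} (M : Matrix (Fin n) (Fin n) ℝ)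
    (hMnn : ∀ i j, 0 ≤ M i j) (hMrow : ∀ i, ∑ j, M i j = 1)
    (phi : Fin n → ℝ) (hphi : ∀ i, phi i ∈ Set.Ioo (0 : ℝ) 1) :
    IsUnit (1 - (1 - Matrix.diagonal phi) * M).det := by
  rw [isUnit_iff_ne_zero]
  intro h
  obtain ⟨v, hv0, hv⟩ := Matrix.exists_mulVec_eq_zero_iff.2 h
  have hv' : ∀ i, v i - (1 - phi i) * ∑ k, M i k * v k = 0 := fun i => by
    rw [← damped_mulVec_apply, hv, Pi.zero_apply]
  refine hv0 (funext fun i => le_antisymm ?_ ?_)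
  · have := nonneg_of_damped_le M hMnn hMrow phi hphi (-v) (fun i => by
      have := hv' i
      simp only [Pi.neg_apply, mul_neg, Finset.sum_neg_distrib]
      linarith) i
    simpa using this
  · exact nonneg_of_damped_le M hMnn hMrow phi hphi v (fun i => by linarith [hv' i]) i

/-- Entrywise form of `S = Φ + (1 - Φ) M S`. -/
lemma Sfun_apply_eq {n : ℕ} (M : Matrix (Fin n) (Fin n) ℝ)
    (hMnn : ∀ i j, 0 ≤ M i j) (hMrow : ∀ i, ∑ j, M i j = 1)
    (phi : Fin n → ℝ) (hphi : ∀ i, phi i ∈ Set.Ioo (0 : ℝ) 1) (i j : Fin n) :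
    Sfun M phi i j =
      (if i = j then phi i else 0) + (1 - phi i) * ∑ k, M i k * Sfun M phi k j := by
  have h : (1 - (1 - Matrix.diagonal phi) * M) * Sfun M phi = Matrix.diagonal phi := by
    rw [Sfun, Matrix.mul_nonsing_inv_cancel_left _ _ (isUnit_det_damped M hMnn hMrow phi hphi)]
  have h2 := congrFun (congrFun h i) j
  have h3 := damped_mulVec_apply M phi (fun k => Sfun M phi k j) i
  have h4 : ((1 - (1 - Matrix.diagonal phi) * M) * Sfun M phi) i j =
    ((1 - (1 - Matrix.diagonal phi) * M) *ᵥ fun k => Sfun M phi k j) i := rfl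
  rw [h4, h3, Matrix.diagonal_apply] at h2
  linarith

lemma Sfun_row_sum {n : ℕ} (M : Matrix (Fin n) (Fin n) ℝ)
    (hMnn : ∀ i j, 0 ≤ M i j) (hMrow : ∀ i, ∑ j, M i j = 1)
    (phi : Fin n → ℝ) (hphi : ∀ i, phi i ∈ Set.Ioo (0 : ℝ) 1) (i : Fin n) :
    ∑ j, Sfun M phi i j = 1 := by
  have h1 : (1 - (1 - Matrix.diagonal phi) * M) *ᵥ (fun _ => 1) = phi := by
    funext i
    rw [damped_mulVec_apply]
    simp [hMrow]
  have h2 : Matrix.diagonal phi *ᵥ (fun _ => 1) = phi := by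
    funext i
    simp [Matrix.mulVec_diagonal]
  have h3 : Sfun M phi *ᵥ (fun _ => 1) = fun _ => 1 := by
    rw [Sfun, ← Matrix.mulVec_mulVec, h2]
    nth_rewrite 2 [← h1]
    rw [Matrix.mulVec_mulVec, Matrix.nonsing_inv_mul _ (isUnit_det_damped M hMnn hMrow phi hphi),
      Matrix.one_mulVec]
  simpa [Matrix.mulVec, dotProduct] using congrFun h3 i

lemma Sfun_pos {n : ℕ} (M : Matrix (Fin n) (Fin n) ℝ)
    (hMnn : ∀ i j, 0 ≤ M i j) (hMrow : ∀ i, ∑ j, M i j = 1)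
    (hirr : ∀ i j, i ≠ j → Relation.TransGen (fun a b => 0 < M b a) i j)
    (phi : Fin n → ℝ) (hphi : ∀ i, phi i ∈ Set.Ioo (0 : ℝ) 1) (i j : Fin n) :
    0 < Sfun M phi i j := by
  have hS := Sfun_apply_eq M hMnn hMrow phi hphi
  have hd : ∀ i j : Fin n, 0 ≤ if i = j then phi i else 0 := fun i j => by
    split_ifs
    exacts [(hphi i).1.le, le_rfl]
  have hnn : ∀ k, 0 ≤ Sfun M phi k j :=
    nonneg_of_damped_le M hMnn hMrow phi hphi (fun k => Sfun M phi k j) fun k => by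
      linarith [hS k j, hd k j]
  have hsum : ∀ k, 0 ≤ ∑ l, M k l * Sfun M phi l j := fun k =>
    Finset.sum_nonneg fun l _ => mul_nonneg (hMnn k l) (hnn l)
  have hjj : 0 < Sfun M phi j j := by
    rw [hS j j, if_pos rfl]
    exact add_pos_of_pos_of_nonneg (hphi j).1
      (mul_nonneg (sub_nonneg.2 (hphi j).2.le) (hsum j))
  have hstep : ∀ a b, 0 < M b a → 0 < Sfun M phi a j → 0 < Sfun M phi b j := by
    intro a b hab ha
    rw [hS b j]
    refine add_pos_of_nonneg_of_pos (hd b j) (mul_pos (sub_pos.2 (hphi b).2) ?_)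
    exact Finset.sum_pos' (fun l _ => mul_nonneg (hMnn b l) (hnn l))
      ⟨a, Finset.mem_univ a, mul_pos hab ha⟩
  by_cases hij : j = i
  · exact hij ▸ hjj
  · have hpath := hirr j i hij
    clear hij
    induction hpath with
    | single h => exact hstep _ _ h hjj
    | tail _ h ih => exact hstep _ _ h ih

/-- For every `i` and every `φ ∈ (0,1)^n`, the row vector
`(e_iᵀ − m_iᵀ)S` has `i`-th entry `(φ_i/(1 − φ_i))·(1 − S_ii) > 0`, and for
`j ≠ i` its `j`-th entry is `−φ_i·(m_iᵀ S e_j) < 0`. -/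
theorem stmt_16 {n : ℕ} (hn : 2 ≤ n) (W M : Matrix (Fin n) (Fin n) ℝ)
    (hWnn : ∀ i j, 0 ≤ W i j) (hWrow : ∀ i, ∑ j, W i j = 1)
    (hWirr : ∀ i j, i ≠ j → Relation.TransGen (fun a b => 0 < W b a) i j)
    (hWprim : ∃ k : ℕ, 0 < k ∧ ∀ i j, 0 < (W ^ k) i j)
    (hMnn : ∀ i j, 0 ≤ M i j) (hMrow : ∀ i, ∑ j, M i j = 1)
    (hMW : ∀ i j, 0 < M i j ↔ 0 < W i j)
    (phi : Fin n → ℝ)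
    (hphi : ∀ i, phi i ∈ Set.Ioo (0 : ℝ) 1) :
    ∀ i : Fin n,
      (((Pi.single i 1 - M i) ᵥ* Sfun M phi) i =
        (phi i / (1 - phi i)) * (1 - Sfun M phi i i)) ∧
      (0 < ((Pi.single i 1 - M i) ᵥ* Sfun M phi) i) ∧
      (∀ j : Fin n, j ≠ i →
        ((Pi.single i 1 - M i) ᵥ* Sfun M phi) j =
          -(phi i) * ((M i ᵥ* Sfun M phi) j) ∧
        ((Pi.single i 1 - M i) ᵥ* Sfun M phi) j < 0) := by
  intro i
  have hirr : ∀ i j, i ≠ j → Relation.TransGen (fun a b => 0 < M b a) i j := fun i j hij =>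
    Relation.TransGen.mono (fun a b h => (hMW b a).2 h) _ _ (hWirr i j hij)
  have hpos := Sfun_pos M hMnn hMrow hirr phi hphi
  have hS := Sfun_apply_eq M hMnn hMrow phi hphi
  have hentry : ∀ j, ((Pi.single i 1 - M i) ᵥ* Sfun M phi) j =
      Sfun M phi i j - (M i ᵥ* Sfun M phi) j := fun j => by
    rw [Matrix.sub_vecMul, Matrix.single_one_vecMul]
    rfl
  have hMS : ∀ j, ∑ k, M i k * Sfun M phi k j = (M i ᵥ* Sfun M phi) j := fun j => rfl
  have h1 : 0 < 1 - phi i := sub_pos.2 (hphi i).2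
  have hdiag : ((Pi.single i 1 - M i) ᵥ* Sfun M phi) i =
      (phi i / (1 - phi i)) * (1 - Sfun M phi i i) := by
    have h := hS i i
    rw [if_pos rfl, hMS] at h
    rw [hentry]
    field_simp
    linarith
  have hlt : Sfun M phi i i < 1 := by
    have : Nontrivial (Fin n) := Fin.nontrivial_iff_two_le.2 hn
    obtain ⟨j, hj⟩ := exists_ne i
    rw [← Sfun_row_sum M hMnn hMrow phi hphi i]
    exact Finset.single_lt_sum hj (Finset.mem_univ i) (Finset.mem_univ j) (hpos i j)
      fun k _ _ => (hpos i k).le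
  refine ⟨hdiag, ?_, fun j hj => ?_⟩
  · rw [hdiag]
    exact mul_pos (div_pos (hphi i).1 h1) (sub_pos.2 hlt)
  · have h := hS i j
    rw [if_neg hj.symm, zero_add, hMS] at h
    have hp : 0 < (M i ᵥ* Sfun M phi) j := by
      have := hpos i j
      rw [h] at this
      exact pos_of_mul_pos_right this h1.le
    have heq : ((Pi.single i 1 - M i) ᵥ* Sfun M phi) j =
        -(phi i) * ((M i ᵥ* Sfun M phi) j) := by
      rw [hentry, h]
      ring
    refine ⟨heq, ?_⟩
    rw [heq, neg_mul]
    exact neg_neg_of_pos (mul_pos (hphi i).1 hp)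
end

section
/- For every initial condition y(0) ∈ ℝ^n, every time t ≥ 0, and every index i, both the private and expressed opinions remain in the interval spanned by the initial private opinions: min_k y_k(0) ≤ y_i(t) ≤ max_k y_k(0) and min_k y_k(0) ≤ ŷ_i(t) ≤ max_k y_k(0). -/
/-!
Each update replaces an opinion by a convex combination of current and initial opinions: the rows
of `W` and `M` are probability vectors, and `lam i`, `phi i` lie in `(0, 1)`. An interval of reals
is convex, so by induction on time every opinion stays in the interval
`[⨅ k, y0 k, ⨆ k, y0 k]`, which contains all initial opinions. The only point needing care is that
the diagonal and off-diagonal parts of `W` act on different vectors; they combine into one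
stochastic row acting on a modified vector (`diagPart_add_offDiagPart_mulVec`).
-/

open Matrix BigOperators

/-- The diagonal part `W̃` of `W`. -/
noncomputable def diagPart {n : ℕ} (W : Matrix (Fin n) (Fin n) ℝ) :
    Matrix (Fin n) (Fin n) ℝ :=
  Matrix.diagonal (fun i => W i i)

/-- The off-diagonal part `Ŵ` of `W`. -/
noncomputable def offDiagPart {n : ℕ} (W : Matrix (Fin n) (Fin n) ℝ) :
    Matrix (Fin n) (Fin n) ℝ :=
  W - diagPart W

/-- The trajectories of the opinion dynamics: `(opinions W M lam phi y0 t).1`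
is the vector of private opinions `y(t)` and `(opinions W M lam phi y0 t).2`
is the vector of expressed opinions `ŷ(t)`, with `ŷ(0) = y(0) = y0`,
`y(t+1) = Λ(W̃ y(t) + Ŵ ŷ(t)) + (I − Λ) y(0)` and
`ŷ(t+1) = Φ y(t+1) + (I − Φ) M ŷ(t)`. -/
noncomputable def opinions {n : ℕ} (W M : Matrix (Fin n) (Fin n) ℝ)
    (lam phi : Fin n → ℝ) (y0 : Fin n → ℝ) :
    ℕ → (Fin n → ℝ) × (Fin n → ℝ)
  | 0 => (y0, y0)
  | t + 1 =>
      let prev := opinions W M lam phi y0 t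
      let ynew := Matrix.diagonal lam *ᵥ
          (diagPart W *ᵥ prev.1 + offDiagPart W *ᵥ prev.2) +
          (1 - Matrix.diagonal lam) *ᵥ y0
      (ynew, Matrix.diagonal phi *ᵥ ynew + ((1 - Matrix.diagonal phi) * M) *ᵥ prev.2)

/-- A row of a stochastic matrix averages a vector, so it preserves membership in an interval. -/
theorem row_sum_mem_Icc {n : ℕ} {w x : Fin n → ℝ} {a b : ℝ} (hw : ∀ j, 0 ≤ w j)
    (hsum : ∑ j, w j = 1) (hx : ∀ j, x j ∈ Set.Icc a b) :
    ∑ j, w j * x j ∈ Set.Icc a b := by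
  simpa only [smul_eq_mul] using
    (convex_Icc a b).sum_mem (fun j _ => hw j) hsum (fun j _ => hx j)

theorem mix_mem_Icc {a b l x z : ℝ} (hl : l ∈ Set.Ioo (0 : ℝ) 1)
    (hx : x ∈ Set.Icc a b) (hz : z ∈ Set.Icc a b) :
    l * x + (1 - l) * z ∈ Set.Icc a b := by
  simpa only [smul_eq_mul] using
    convex_Icc a b hx hz hl.1.le (sub_nonneg.2 hl.2.le) (by ring)

/-- The split `W̃ y + Ŵ ŷ` is, in coordinate `i`, the `i`-th row of `W` applied to the single
vector `ŷ` with its `i`-th entry replaced by `y i`. -/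
theorem diagPart_add_offDiagPart_mulVec {n : ℕ} (W : Matrix (Fin n) (Fin n) ℝ)
    (y z : Fin n → ℝ) (i : Fin n) :
    (diagPart W *ᵥ y + offDiagPart W *ᵥ z) i =
      ∑ j, W i j * Function.update z i (y i) j := by
  have h : ∀ j, W i j * Function.update z i (y i) j =
      W i j * z j + if j = i then W i i * (y i - z i) else 0 := by
    intro j
    by_cases hj : j = i
    · subst hj
      simp
      ring
    · simp [hj]
  simp only [h, Finset.sum_add_distrib, Finset.sum_ite_eq', Finset.mem_univ, if_true]
  simp only [diagPart, offDiagPart, sub_mulVec, Pi.add_apply, Pi.sub_apply, mulVec_diagonal]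
  simp only [mulVec, dotProduct]
  ring

/-- For every initial condition, every time `t`, and every
index `i`, both private and expressed opinions remain within the interval
spanned by the initial private opinions. -/
theorem stmt_17 {n : ℕ} (hn : 2 ≤ n) (W M : Matrix (Fin n) (Fin n) ℝ)
    (hWnn : ∀ i j, 0 ≤ W i j) (hWrow : ∀ i, ∑ j, W i j = 1)
    (hWirr : ∀ i j, i ≠ j → Relation.TransGen (fun a b => 0 < W b a) i j)
    (hWprim : ∃ k : ℕ, 0 < k ∧ ∀ i j, 0 < (W ^ k) i j)
    (hMnn : ∀ i j, 0 ≤ M i j) (hMrow : ∀ i, ∑ j, M i j = 1)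
    (hMW : ∀ i j, 0 < M i j ↔ 0 < W i j)
    (lam phi : Fin n → ℝ)
    (hlam : ∀ i, lam i ∈ Set.Ioo (0 : ℝ) 1)
    (hphi : ∀ i, phi i ∈ Set.Ioo (0 : ℝ) 1) :
    ∀ y0 : Fin n → ℝ, ∀ t : ℕ, ∀ i : Fin n,
      ((⨅ k, y0 k) ≤ (opinions W M lam phi y0 t).1 i ∧
        (opinions W M lam phi y0 t).1 i ≤ ⨆ k, y0 k) ∧
      ((⨅ k, y0 k) ≤ (opinions W M lam phi y0 t).2 i ∧
        (opinions W M lam phi y0 t).2 i ≤ ⨆ k, y0 k) := by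
  intro y0 t
  set a := ⨅ k, y0 k with ha
  set b := ⨆ k, y0 k with hb
  have h0 : ∀ i, y0 i ∈ Set.Icc a b := fun i =>
    ⟨ciInf_le (Set.finite_range y0).bddBelow i, le_ciSup (Set.finite_range y0).bddAbove i⟩
  suffices h : (∀ i, (opinions W M lam phi y0 t).1 i ∈ Set.Icc a b) ∧
      ∀ i, (opinions W M lam phi y0 t).2 i ∈ Set.Icc a b from
    fun i => ⟨h.1 i, h.2 i⟩
  induction t with
  | zero => exact ⟨h0, h0⟩
  | succ t ih =>
    obtain ⟨ihy, ihz⟩ := ih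
    have hy : ∀ i, (opinions W M lam phi y0 (t + 1)).1 i ∈ Set.Icc a b := by
      intro i
      have hrow := row_sum_mem_Icc (hWnn i) (hWrow i)
        (x := Function.update (opinions W M lam phi y0 t).2 i
          ((opinions W M lam phi y0 t).1 i)) (a := a) (b := b) (by
          intro j
          by_cases hj : j = i
          · subst hj
            simpa using ihy j
          · simpa [hj] using ihz j)
      rw [← diagPart_add_offDiagPart_mulVec] at hrow
      have := mix_mem_Icc (hlam i) hrow (h0 i)
      have e : (opinions W M lam phi y0 (t + 1)).1 i = lam i *
          (diagPart W *ᵥ (opinions W M lam phi y0 t).1 +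
            offDiagPart W *ᵥ (opinions W M lam phi y0 t).2) i + (1 - lam i) * y0 i := by
        rw [opinions]
        simp only [sub_mulVec, one_mulVec, Pi.add_apply, Pi.sub_apply, mulVec_diagonal]
        ring
      rwa [e]
    refine ⟨hy, fun i => ?_⟩
    have := mix_mem_Icc (hphi i) (hy i) (row_sum_mem_Icc (hMnn i) (hMrow i) ihz)
    have e : (opinions W M lam phi y0 (t + 1)).2 i =
        phi i * (opinions W M lam phi y0 (t + 1)).1 i +
          (1 - phi i) * ∑ j, M i j * (opinions W M lam phi y0 t).2 j := by
      rw [opinions]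
      simp only [← mulVec_mulVec, sub_mulVec, one_mulVec, Pi.add_apply, Pi.sub_apply,
        mulVec_diagonal]
      simp only [mulVec, dotProduct]
      ring
    rwa [e]
end

section
/- The 2×2 matrix V = [[λ₁w₁₁, 0],[φ₁, (1−φ₁)/n]] has spectral radius strictly less than 1, and the sequences y₁(t), ŷ₁(t) defined by the recursion converge as t → ∞ to the limits y₁* = (1 − λ₁)/(1 − λ₁w₁₁) and ŷ₁* = (n·φ₁/(n − 1 + φ₁))·y₁*. -/
/-!
`V` is lower triangular, so its spectrum lies in the set of its diagonal entries `λ₁w₁₁` and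
`(1 - φ₁)/n`, both of which lie in `[0, 1)`; this gives the bound on the spectral radius
(`spectralRadius_lowerTriangular_lt_one`).

Both beliefs satisfy a scalar recursion `u (t+1) = a * u t + b t` with `|a| < 1` and a convergent
forcing term `b`: constant for `y₁`, and `φ₁ * y₁ (t+1)` for `ŷ₁`. Such a sequence tends to
`(lim b) / (1 - a)` (`tendsto_of_affine_recursion`). Applying this twice gives the two limits.
-/

open Matrix BigOperators Filter Topology

/-- The test individual's private belief in Asch's experiment:
`y₁(0) = 1` and `y₁(t+1) = λ₁w₁₁ y₁(t) + (1 − λ₁)`. -/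
noncomputable def aschY (lam1 w11 : ℝ) : ℕ → ℝ
  | 0 => 1
  | t + 1 => lam1 * w11 * aschY lam1 w11 t + (1 - lam1)

/-- The test individual's expressed belief in Asch's experiment:
`ŷ₁(0) = 1` and `ŷ₁(t) = φ₁ y₁(t) + ((1 − φ₁)/n) ŷ₁(t−1)` for `t ≥ 1`. -/
noncomputable def aschYhat (lam1 w11 phi1 : ℝ) (n : ℕ) : ℕ → ℝ
  | 0 => 1
  | t + 1 => phi1 * aschY lam1 w11 (t + 1) +
      ((1 - phi1) / n) * aschYhat lam1 w11 phi1 n t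

/-- A perturbed contraction with vanishing perturbation tends to zero. -/
lemma tendsto_zero_of_contraction {a : ℝ} (ha : |a| < 1) {e c : ℕ → ℝ}
    (hrec : ∀ t, e (t + 1) = a * e t + c t) (hc : Tendsto c atTop (𝓝 0)) :
    Tendsto e atTop (𝓝 0) := by
  rw [Metric.tendsto_atTop]
  intro ε hε
  -- Once `|c t| ≤ (ε / 2) * (1 - |a|)`, the interval `[-ε/2, ε/2]` absorbs the perturbation.
  have hδ : 0 < ε / 2 * (1 - |a|) := mul_pos (half_pos hε) (sub_pos.2 ha)
  obtain ⟨N, hN⟩ := Metric.tendsto_atTop.1 hc _ hδ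
  have hbound : ∀ k, |e (N + k)| ≤ |a| ^ k * |e N| + ε / 2 := by
    intro k
    induction k with
    | zero => simp; linarith
    | succ k ih =>
      have h1 : |c (N + k)| < ε / 2 * (1 - |a|) := by
        simpa [Real.dist_eq] using hN (N + k) (by omega)
      calc |e (N + (k + 1))| = |a * e (N + k) + c (N + k)| := by rw [← add_assoc, hrec]
        _ ≤ |a| * |e (N + k)| + |c (N + k)| := by
          rw [← abs_mul]; exact abs_add_le _ _
        _ ≤ |a| * (|a| ^ k * |e N| + ε / 2) + ε / 2 * (1 - |a|) := by gcongr
        _ = |a| ^ (k + 1) * |e N| + ε / 2 := by ring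
  have hpow : Tendsto (fun k : ℕ => |a| ^ k * |e N|) atTop (𝓝 0) := by
    simpa using (tendsto_pow_atTop_nhds_zero_of_lt_one (abs_nonneg a) ha).mul_const |e N|
  obtain ⟨K, hK⟩ := Filter.eventually_atTop.1 (hpow.eventually_lt_const (half_pos hε))
  refine ⟨N + K, fun t ht => ?_⟩
  obtain ⟨k, rfl⟩ := Nat.exists_eq_add_of_le (show N ≤ t by omega)
  have h1 := hK k (by omega)
  have h2 := hbound k
  rw [Real.dist_eq, sub_zero]
  linarith

lemma tendsto_of_affine_recursion {a B : ℝ} (ha : |a| < 1) {u b : ℕ → ℝ}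
    (hrec : ∀ t, u (t + 1) = a * u t + b t) (hb : Tendsto b atTop (𝓝 B)) :
    Tendsto u atTop (𝓝 (B / (1 - a))) := by
  have hne : 1 - a ≠ 0 := (sub_pos.2 (abs_lt.1 ha).2).ne'
  have h := tendsto_zero_of_contraction ha (e := fun t => u t - B / (1 - a))
    (c := fun t => b t - B)
    (fun t => by simp only [hrec]; field_simp; ring)
    (by simpa using hb.sub_const B)
  simpa using h.add_const (B / (1 - a))

lemma spectralRadius_lowerTriangular_lt_one {a d : ℝ} (p : ℝ) (ha : |a| < 1) (hd : |d| < 1) :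
    spectralRadius ℂ
      ((!![a, 0; p, d] : Matrix (Fin 2) (Fin 2) ℝ).map Complex.ofReal) < 1 := by
  have hle : spectralRadius ℂ
      ((!![a, 0; p, d] : Matrix (Fin 2) (Fin 2) ℝ).map Complex.ofReal) ≤
      max (‖(a : ℂ)‖₊ : ENNReal) ‖(d : ℂ)‖₊ := by
    refine iSup₂_le fun μ hμ => ?_
    rw [spectrum.mem_iff, Matrix.isUnit_iff_isUnit_det, isUnit_iff_ne_zero, not_not,
      Matrix.det_fin_two] at hμ
    simp [Matrix.algebraMap_matrix_apply, sub_eq_zero] at hμ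
    rcases hμ with rfl | rfl
    · exact le_max_left _ _
    · exact le_max_right _ _
  refine hle.trans_lt (max_lt ?_ ?_)
  · rw [ENNReal.coe_lt_one_iff, ← NNReal.coe_lt_coe]
    simpa using ha
  · rw [ENNReal.coe_lt_one_iff, ← NNReal.coe_lt_coe]
    simpa using hd

/-- For `n ≥ 2`, `λ₁ ∈ [0,1]`, `w₁₁ ∈ (0,1)`, `φ₁ ∈ [0,1]`,
the matrix `V = [[λ₁w₁₁, 0],[φ₁, (1−φ₁)/n]]` has spectral radius `< 1`, and
the recursion converges: `y₁(t) → (1 − λ₁)/(1 − λ₁w₁₁)` and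
`ŷ₁(t) → (nφ₁/(n − 1 + φ₁))·y₁*`. -/
theorem stmt_18 {n : ℕ} (hn : 2 ≤ n) (lam1 w11 phi1 : ℝ)
    (hlam : lam1 ∈ Set.Icc (0 : ℝ) 1) (hw : w11 ∈ Set.Ioo (0 : ℝ) 1)
    (hphi : phi1 ∈ Set.Icc (0 : ℝ) 1) :
    spectralRadius ℂ
      ((!![lam1 * w11, 0; phi1, (1 - phi1) / n] : Matrix (Fin 2) (Fin 2) ℝ).map
        Complex.ofReal) < 1 ∧
    Tendsto (aschY lam1 w11) atTop (𝓝 ((1 - lam1) / (1 - lam1 * w11))) ∧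
    Tendsto (aschYhat lam1 w11 phi1 n) atTop
      (𝓝 ((n * phi1 / (n - 1 + phi1)) * ((1 - lam1) / (1 - lam1 * w11)))) := by
  obtain ⟨hl0, hl1⟩ := hlam
  obtain ⟨hw0, hw1⟩ := hw
  obtain ⟨hp0, hp1⟩ := hphi
  have hn' : (2 : ℝ) ≤ n := by exact_mod_cast hn
  have ha : |lam1 * w11| < 1 := by
    rw [abs_of_nonneg (by positivity)]
    nlinarith
  have hd : |(1 - phi1) / (n : ℝ)| < 1 := by
    rw [abs_of_nonneg (div_nonneg (by linarith) (by linarith)), div_lt_one (by linarith)]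
    linarith
  have hy : Tendsto (aschY lam1 w11) atTop (𝓝 ((1 - lam1) / (1 - lam1 * w11))) :=
    tendsto_of_affine_recursion ha (b := fun _ => 1 - lam1) (fun _ => rfl) tendsto_const_nhds
  refine ⟨spectralRadius_lowerTriangular_lt_one phi1 ha hd, hy, ?_⟩
  have hyhat : Tendsto (aschYhat lam1 w11 phi1 n) atTop
      (𝓝 (phi1 * ((1 - lam1) / (1 - lam1 * w11)) / (1 - (1 - phi1) / n))) :=
    tendsto_of_affine_recursion hd (b := fun t => phi1 * aschY lam1 w11 (t + 1))
      (fun _ => by rw [aschYhat, add_comm])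
      (((tendsto_add_atTop_iff_nat 1).2 hy).const_mul phi1)
  convert hyhat using 2
  have hn0 : (n : ℝ) ≠ 0 := (by linarith : (0 : ℝ) < _).ne'
  have hden : (n : ℝ) - 1 + phi1 ≠ 0 := (by linarith : (0 : ℝ) < _).ne'
  have hfac : 1 - (1 - phi1) / (n : ℝ) = (n - 1 + phi1) / n := by
    field_simp
    ring
  rw [hfac]
  field_simp
end
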